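/- Let P₀ be the 4 × 5 matrix over GF(4) with rows (1,α²,1,α,α²), (α,α,α²,1,0), (α,1,α²,α,α), (1,0,1,1,1), and let A = [I₄ | D₄ | P₀] be the 4 × 15 matrix over GF(4) obtained by placing the 4 × 4 identity matrix, the matrix D₄, and P₀ side by side. A field F realizes the column matroid of A if and only if F contains an element z with z² = z + 1. (The universal partial field of this matroid is the golden-mean partial field 𝔾.) -/

import Mathlib

/-- A field `F` realizes the column matroid of a matrix `A` over `K` if some matrix `B`
over `F` with the same column index set has exactly the same linearly independent sets
of columns as `A`. -/
def RealizesColumnMatroid {K : Type*} [Field K] {m k : ℕ}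
    (A : Matrix (Fin m) (Fin k) K) (F : Type*) [Field F] : Prop :=
  ∃ (n : ℕ) (B : Matrix (Fin n) (Fin k) F),
    ∀ S : Set (Fin k),
      LinearIndependent F (fun j : S => B.transpose (j : Fin k)) ↔
        LinearIndependent K (fun j : S => A.transpose (j : Fin k))

/-- The matrix `[I₄ | D₄ | P₀]` over `GF(4)`, where `D₄` is the (mod-2) signed incidence
matrix of `K₄` and `P₀` is matrix `III` of the paper. -/
noncomputable def matI4D4P0 (α : GaloisField 2 2) :
    Matrix (Fin 4) (Fin 15) (GaloisField 2 2) :=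
  !![1, 0, 0, 0,  1, 1, 1, 0, 0, 0,  1, α ^ 2, 1, α, α ^ 2;
     0, 1, 0, 0,  1, 0, 0, 1, 1, 0,  α, α, α ^ 2, 1, 0;
     0, 0, 1, 0,  0, 1, 0, 1, 0, 1,  α, 1, α ^ 2, α, α;
     0, 0, 0, 1,  0, 0, 1, 0, 1, 1,  1, 0, 1, 1, 1]

/-!
The matrix lifts to a matrix over `ℤ[τ]`, `τ² = τ + 1`, all of whose minors are zero or units, so
every ring homomorphism from `ℤ[τ]` to a field preserves the vanishing of minors. Hence any root
of `x² - x - 1` gives a realization. Conversely, a realization can be written in the basis formed by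
its first four columns and then has the same zero minors as the given matrix. After scaling rows
and columns, a few vanishing minors of order two and three leave two entries `a`, `g` with
`g = a - 1` and `a * g = 1`, so `a` is a root of `x² - x - 1`.
-/

open Matrix Function

section Minors

variable {m n R S : Type*} [CommRing R] [CommRing S]

/-- Every minor of `A` is zero or a unit: `A` is a matrix over the partial field `(R, Rˣ)`. -/
def MinorsZeroOrUnit (A : Matrix m n R) : Prop :=
  ∀ ⦃p : ℕ⦄ (r : Fin p → m) (s : Fin p → n),
    (A.submatrix r s).det = 0 ∨ IsUnit (A.submatrix r s).det

/-- Corresponding minors of `A` and `B`, of all orders, vanish simultaneously. -/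
def SameZeroMinors (A : Matrix m n R) (B : Matrix m n S) : Prop :=
  ∀ ⦃p : ℕ⦄ (r : Fin p → m) (s : Fin p → n),
    (A.submatrix r s).det = 0 ↔ (B.submatrix r s).det = 0

theorem MinorsZeroOrUnit.sameZeroMinors_map [Nontrivial S] {A : Matrix m n R}
    (hA : MinorsZeroOrUnit A) (f : R →+* S) : SameZeroMinors A (A.map f) := by
  intro p r s
  have hdet : ((A.map f).submatrix r s).det = f (A.submatrix r s).det := (f.map_det _).symm
  rw [hdet]
  refine ⟨fun h ↦ by rw [h, map_zero], fun h ↦ (hA r s).resolve_right fun hunit ↦ ?_⟩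
  exact (hunit.map f).ne_zero h

namespace SameZeroMinors

variable {A : Matrix m n R} {B : Matrix m n S}

theorem symm (h : SameZeroMinors A B) : SameZeroMinors B A :=
  fun _ r s ↦ (h r s).symm

theorem trans {T : Type*} [CommRing T] {C : Matrix m n T} (h : SameZeroMinors A B)
    (h' : SameZeroMinors B C) : SameZeroMinors A C :=
  fun _ r s ↦ (h r s).trans (h' r s)

theorem det_submatrix_eq_zero_iff {ι : Type*} [Fintype ι] [DecidableEq ι]
    (h : SameZeroMinors A B) (r : ι → m) (s : ι → n) :
    (A.submatrix r s).det = 0 ↔ (B.submatrix r s).det = 0 := by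
  let e := (Fintype.equivFin ι).symm
  rw [← det_submatrix_equiv_self e, ← det_submatrix_equiv_self e (B.submatrix r s),
    submatrix_submatrix, submatrix_submatrix]
  exact h (r ∘ e) (s ∘ e)

theorem apply_eq_zero_iff (h : SameZeroMinors A B) (i : m) (j : n) : A i j = 0 ↔ B i j = 0 := by
  simpa only [det_unique, submatrix_apply, cons_val_fin_one] using h ![i] ![j]

theorem mul_eq_mul_iff (h : SameZeroMinors A B) (i i' : m) (j j' : n) :
    A i j * A i' j' = A i j' * A i' j ↔ B i j * B i' j' = B i j' * B i' j := by
  simpa only [det_fin_two, submatrix_apply, cons_val_zero, cons_val_one, sub_eq_zero] using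
    h ![i, i'] ![j, j']

theorem scale [IsDomain S] (h : SameZeroMinors A B) {u : m → S} {v : n → S}
    (hu : ∀ i, u i ≠ 0) (hv : ∀ j, v j ≠ 0) :
    SameZeroMinors A (of fun i j ↦ u i * B i j * v j) := by
  intro p r s
  have hsub : (of fun i j ↦ u i * B i j * v j).submatrix r s =
      diagonal (u ∘ r) * B.submatrix r s * diagonal (v ∘ s) := by
    ext i j
    simp
  simp [h r s, hsub, Finset.prod_eq_zero_iff, hu, hv]

end SameZeroMinors

section StandardForm

variable [Fintype m] [DecidableEq m]

theorem det_submatrix_extend {ι : Type*} [Fintype ι] [DecidableEq ι] {A : Matrix m n R}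
    {e : m → n} (he : A.submatrix id e = 1) {r : ι → m} (hr : Injective r) (s : ι → n) :
    (A.submatrix id (extend r s e)).det = (A.submatrix r s).det := by
  classical
  have hcol : ∀ i j, j ∉ Set.range r →
      A.submatrix id (extend r s e) i j = (1 : Matrix m m R) i j := by
    intro i j hj
    rw [submatrix_apply, extend_apply' _ _ _ hj, ← he, submatrix_apply]
  rw [twoBlockTriangular_det' _ (· ∈ Set.range r) fun i hi j hj ↦ by
    rw [hcol i j hj, one_apply_ne (ne_of_mem_of_not_mem hi hj)]]
  have hrange : ((A.submatrix id (extend r s e)).toSquareBlockProp (· ∈ Set.range r)).det =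
      (A.submatrix r s).det := by
    rw [← det_submatrix_equiv_self (Equiv.ofInjective r hr)]
    congr 1
    ext i j
    simp [toSquareBlockProp, hr.extend_apply]
  have hcompl : (A.submatrix id (extend r s e)).toSquareBlockProp (· ∉ Set.range r) = 1 := by
    ext i j
    exact (hcol i j j.2).trans (by simp [one_apply, Subtype.ext_iff])
  rw [hcompl, det_one, mul_one]
  convert hrange

theorem sameZeroMinors_of_maximal {A : Matrix m n R} {B : Matrix m n S} {e : m → n}
    (hA : A.submatrix id e = 1) (hB : B.submatrix id e = 1)
    (h : ∀ s : m → n, (A.submatrix id s).det = 0 ↔ (B.submatrix id s).det = 0) :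
    SameZeroMinors A B := by
  intro p r s
  by_cases hr : Injective r
  · rw [← det_submatrix_extend hA hr, ← det_submatrix_extend hB hr, h]
  · obtain ⟨i, j, hij, hne⟩ := not_injective_iff.mp hr
    rw [det_zero_of_row_eq hne (funext fun l ↦ by simp [hij]),
      det_zero_of_row_eq hne (funext fun l ↦ by simp [hij])]
    exact iff_of_true rfl rfl

theorem minorsZeroOrUnit_of_strictMono {k : ℕ} [LinearOrder n] {A : Matrix (Fin k) n R}
    {e : Fin k → n} (he : A.submatrix id e = 1)
    (h : ∀ s : Fin k → n, StrictMono s →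
      (A.submatrix id s).det = 0 ∨ IsUnit (A.submatrix id s).det) :
    MinorsZeroOrUnit A := by
  have hmaximal (s : Fin k → n) :
      (A.submatrix id s).det = 0 ∨ IsUnit (A.submatrix id s).det := by
    by_cases hs : Injective s
    · have hsort := h (s ∘ Tuple.sort s)
        ((Tuple.monotone_sort s).strictMono_of_injective (hs.comp (Tuple.sort s).injective))
      have hsub : A.submatrix id (s ∘ Tuple.sort s) =
        (A.submatrix id s).submatrix id (Tuple.sort s) := rfl
      rw [hsub, det_permute'] at hsort
      obtain hsign | hsign := Int.units_eq_one_or (Tuple.sort s).sign <;>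
        simpa [hsign] using hsort
    · obtain ⟨i, j, hij, hne⟩ := not_injective_iff.mp hs
      exact .inl (det_zero_of_column_eq hne fun l ↦ by simp [hij])
  intro p r s
  by_cases hr : Injective r
  · rw [← det_submatrix_extend he hr]
    exact hmaximal _
  · obtain ⟨i, j, hij, hne⟩ := not_injective_iff.mp hr
    exact .inl (det_zero_of_row_eq hne (funext fun l ↦ by simp [hij]))

end StandardForm

section ColumnMatroid

variable {K F : Type*} [Field K] [Field F]

theorem linearIndependent_col_iff_exists_det_ne_zero [Finite m] [Fintype n] [DecidableEq n]
    (A : Matrix m n K) :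
    LinearIndependent K A.col ↔ ∃ r : n → m, (A.submatrix r id).det ≠ 0 := by
  cases nonempty_fintype m
  constructor
  · intro hA
    obtain ⟨κ, a, -, hspan, hli⟩ := exists_linearIndependent' K A.row
    have htop : Submodule.span K (Set.range A.row) = ⊤ := by
      apply Submodule.eq_top_of_finrank_eq
      rw [← rank_eq_finrank_span_row, ← rank_transpose,
        LinearIndependent.rank_matrix (M := Aᵀ) hA, Module.finrank_fintype_fun_eq_card]
    let b : Module.Basis κ K (n → K) := .mk hli (by rw [hspan, htop])
    let e : n ≃ κ := (Pi.basisFun K n).indexEquiv b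
    refine ⟨a ∘ e, ?_⟩
    rw [← isUnit_iff_ne_zero, ← isUnit_iff_isUnit_det, ← linearIndependent_rows_iff_isUnit]
    exact hli.comp e e.injective
  · rintro ⟨r, hr⟩
    rw [← isUnit_iff_ne_zero, ← isUnit_iff_isUnit_det, ← linearIndependent_cols_iff_isUnit] at hr
    exact hr.of_comp (LinearMap.funLeft K K r)

theorem SameZeroMinors.linearIndepOn_col_iff [Finite m] [Finite n] {A : Matrix m n K}
    {B : Matrix m n F} (h : SameZeroMinors A B) (s : Set n) :
    LinearIndepOn F B.col s ↔ LinearIndepOn K A.col s := by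
  classical
  cases nonempty_fintype s
  change LinearIndependent F (B.submatrix id ((↑) : s → n)).col ↔
    LinearIndependent K (A.submatrix id ((↑) : s → n)).col
  simp only [linearIndependent_col_iff_exists_det_ne_zero, submatrix_submatrix, id_comp, comp_id,
    ne_eq, h.det_submatrix_eq_zero_iff]

theorem linearIndependent_col_iff_det_ne_zero [Fintype m] [DecidableEq m] {A : Matrix m m K} :
    LinearIndependent K A.col ↔ A.det ≠ 0 := by
  rw [linearIndependent_cols_iff_isUnit, isUnit_iff_isUnit_det, isUnit_iff_ne_zero]

theorem sameZeroMinors_of_linearIndepOn_col_iff [Finite m] [DecidableEq m] {A : Matrix m n K}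
    {B : Matrix m n F} {e : m → n} (hA : A.submatrix id e = 1) (hB : B.submatrix id e = 1)
    (h : ∀ s, LinearIndepOn F B.col s ↔ LinearIndepOn K A.col s) : SameZeroMinors A B := by
  cases nonempty_fintype m
  refine sameZeroMinors_of_maximal hA hB fun s ↦ ?_
  rw [← not_iff_not, ← ne_eq, ← ne_eq, ← linearIndependent_col_iff_det_ne_zero,
    ← linearIndependent_col_iff_det_ne_zero]
  change LinearIndependent K (A.col ∘ s) ↔ LinearIndependent F (B.col ∘ s)
  by_cases hs : Injective s
  · rw [← linearIndepOn_range_iff hs, ← linearIndepOn_range_iff hs, h]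
  · exact iff_of_false (fun hA ↦ hs hA.injective.of_comp) fun hB ↦ hs hB.injective.of_comp

theorem exists_matrix_linearIndepOn_col_iff [Finite m] [DecidableEq m] {V : Type*}
    [AddCommGroup V] [Module F V] {v : n → V} {e : m → n} (hv : LinearIndependent F (v ∘ e))
    (hspan : ∀ j, v j ∈ Submodule.span F (Set.range (v ∘ e))) :
    ∃ B : Matrix m n F, B.submatrix id e = 1 ∧
      ∀ s, LinearIndepOn F B.col s ↔ LinearIndepOn F v s := by
  let b := Module.Basis.span hv
  refine ⟨of fun i j ↦ b.repr ⟨v j, hspan j⟩ i, ?_, fun s ↦ ?_⟩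
  · ext i j
    have hb : (⟨v (e j), hspan (e j)⟩ : Submodule.span F _) = b j :=
      (Module.Basis.span_apply hv j).symm
    simp [hb, one_apply, Finsupp.single_apply, eq_comm]
  · have hcoord := b.equivFun.toLinearMap.linearIndependent_iff
      (v := fun j : s ↦ ⟨v j, hspan j⟩) b.equivFun.ker
    rw [← (Submodule.subtype _).linearIndependent_iff (Submodule.ker_subtype _)] at hcoord
    exact hcoord

theorem exists_sameZeroMinors_of_linearIndepOn_col_iff [Finite m] [DecidableEq m] {V : Type*}
    [AddCommGroup V] [Module F V] {A : Matrix m n K} {v : n → V} {e : m → n}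
    (he : A.submatrix id e = 1) (h : ∀ s, LinearIndepOn F v s ↔ LinearIndepOn K A.col s) :
    ∃ B : Matrix m n F, SameZeroMinors A B := by
  cases nonempty_fintype m
  have he_col : A.col ∘ e = Pi.basisFun K m := by
    funext j i
    rw [Function.comp_apply, col_apply, Pi.basisFun_apply, Pi.single_apply, ← one_apply, ← he]
    rfl
  have hA : LinearIndependent K (A.col ∘ e) := he_col ▸ (Pi.basisFun K m).linearIndependent
  have he_inj : Injective e := hA.injective.of_comp
  have hv_on : LinearIndepOn F v (Set.range e) :=
    (h _).mpr ((linearIndepOn_range_iff he_inj _).mpr hA)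
  have hspan (j : n) : v j ∈ Submodule.span F (Set.range (v ∘ e)) := by
    have hA_mem : A.col j ∈ Submodule.span K (A.col '' Set.range e) := by
      rw [← Set.range_comp, he_col, (Pi.basisFun K m).span_eq]
      exact Submodule.mem_top
    rw [Set.range_comp, hv_on.mem_span_iff, h]
    exact ((h _).mp hv_on).mem_span_iff.mp hA_mem
  obtain ⟨B, hB, hBv⟩ :=
    exists_matrix_linearIndepOn_col_iff ((linearIndepOn_range_iff he_inj _).mp hv_on) hspan
  exact ⟨B, sameZeroMinors_of_linearIndepOn_col_iff he hB fun s ↦ (hBv s).trans (h s)⟩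

theorem realizesColumnMatroid_iff_exists_sameZeroMinors {m k : ℕ} {A : Matrix (Fin m) (Fin k) K}
    {e : Fin m → Fin k} (he : A.submatrix id e = 1) :
    RealizesColumnMatroid A F ↔ ∃ B : Matrix (Fin m) (Fin k) F, SameZeroMinors A B :=
  ⟨fun ⟨_, _, hB⟩ ↦ exists_sameZeroMinors_of_linearIndepOn_col_iff he hB,
    fun ⟨B, hB⟩ ↦ ⟨m, B, hB.linearIndepOn_col_iff⟩⟩

end ColumnMatroid

end Minors

/-- The ring `ℤ[τ]` of golden integers, `τ² = 1 + τ`. With its group of units it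
forms the golden-mean partial field `𝔾`. -/
abbrev GoldenInt := QuadraticAlgebra ℤ 1 1

local notation "τ" => (QuadraticAlgebra.omega : GoldenInt)

/-- The ring homomorphism `τ ↦ z` attached to a root `z` of `x² - x - 1`. -/
def GoldenInt.eval {S : Type*} [CommRing S] {z : S} (hz : z ^ 2 = z + 1) : GoldenInt →+* S :=
  (QuadraticAlgebra.lift ⟨z, by rw [← sq, hz, one_smul, one_smul, add_comm]⟩).toRingHom

theorem GoldenInt.eval_omega {S : Type*} [CommRing S] {z : S} (hz : z ^ 2 = z + 1) :
    GoldenInt.eval hz τ = z := by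
  simp [GoldenInt.eval]

section LaplaceExpansion

variable {R : Type*} [CommRing R]

/-- The Plücker coordinate `i, j` of the plane spanned by `p` and `q`: the minor of `[p | q]` with
rows `i` and `j`. -/
def pluckerCoord (p q : Fin 4 → R) (i j : Fin 4) : R :=
  p i * q j - p j * q i

/-- The determinant of `[p | q | r | s]`, in the form of its Laplace expansion along the first two
columns. Evaluating it in the kernel is far cheaper than evaluating `Matrix.det`. -/
def laplaceDet (p q r s : Fin 4 → R) : R :=
  pluckerCoord p q 0 1 * pluckerCoord r s 2 3 - pluckerCoord p q 0 2 * pluckerCoord r s 1 3 +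
    pluckerCoord p q 0 3 * pluckerCoord r s 1 2 + pluckerCoord p q 1 2 * pluckerCoord r s 0 3 -
    pluckerCoord p q 1 3 * pluckerCoord r s 0 2 + pluckerCoord p q 2 3 * pluckerCoord r s 0 1

theorem det_eq_laplaceDet (A : Matrix (Fin 4) (Fin 4) R) :
    A.det = laplaceDet (A.col 0) (A.col 1) (A.col 2) (A.col 3) := by
  rw [det_succ_row_zero, Fin.sum_univ_four, det_fin_three, det_fin_three, det_fin_three,
    det_fin_three]
  simp only [submatrix_apply, laplaceDet, pluckerCoord, col_apply, Fin.succAbove, Fin.isValue,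
    Fin.reduceSucc, Fin.reduceCastSucc, Fin.reduceLT, ↓reduceIte, Fin.coe_ofNat_eq_mod]
  ring

end LaplaceExpansion

/-- A lift of `[I₄ | D₄ | P₀]` along `τ ↦ α` all of whose minors are zero or units. Each column of
`D₄` is lifted to `eᵢ - eⱼ` with `i < j`. -/
def goldenMatrix : Matrix (Fin 4) (Fin 15) GoldenInt :=
  !![1, 0, 0, 0,  1, 1, 1, 0, 0, 0,    1, τ - 1, 1, τ, τ + 1;
     0, 1, 0, 0,  -1, 0, 0, 1, 1, 0,   τ, 2 - τ, τ - 1, 1, 0;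
     0, 0, 1, 0,  0, -1, 0, -1, 0, 1,  -τ, -1, 1 - τ, -τ, -τ;
     0, 0, 0, 1,  0, 0, -1, 0, -1, -1, -1, 0, -1, -1, -1]

theorem goldenMatrix_submatrix_eq_one : goldenMatrix.submatrix id ![0, 1, 2, 3] = 1 := by
  decide

theorem goldenMatrix_laplaceDet_eq_zero_or_isUnit_norm : ∀ i j : Fin 15, i < j → ∀ k, j < k →
    ∀ l, k < l →
      laplaceDet (goldenMatrix.col i) (goldenMatrix.col j) (goldenMatrix.col k)
          (goldenMatrix.col l) = 0 ∨
        IsUnit (laplaceDet (goldenMatrix.col i) (goldenMatrix.col j) (goldenMatrix.col k)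
          (goldenMatrix.col l)).norm := by
  decide +kernel

theorem goldenMatrix_minorsZeroOrUnit : MinorsZeroOrUnit goldenMatrix := by
  refine minorsZeroOrUnit_of_strictMono goldenMatrix_submatrix_eq_one fun s hs ↦ ?_
  rw [QuadraticAlgebra.isUnit_iff_norm_isUnit, det_eq_laplaceDet]
  exact goldenMatrix_laplaceDet_eq_zero_or_isUnit_norm _ _ (hs (by decide)) _ (hs (by decide)) _
    (hs (by decide))

theorem matI4D4P0_eq_goldenMatrix_map {α : GaloisField 2 2} (hα : α ^ 2 = α + 1) :
    matI4D4P0 α = goldenMatrix.map (GoldenInt.eval hα) := by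
  have eval_two : GoldenInt.eval hα 2 = 0 :=
    (map_ofNat (GoldenInt.eval hα) 2).trans CharTwo.two_eq_zero
  ext i j
  fin_cases i <;> fin_cases j <;>
    simp [matI4D4P0, goldenMatrix, GoldenInt.eval_omega, hα, CharTwo.neg_eq, CharTwo.sub_eq_add,
      eval_two, add_comm]

section ForcedRoot

variable {F : Type*} [Field F]

/-- The row of the first nonzero entry in each column of `goldenMatrix`. -/
def leadingRow : Fin 15 → Fin 4 :=
  ![0, 1, 2, 3, 0, 0, 0, 1, 1, 2, 0, 0, 0, 0, 0]

/-- A matrix with the zero minors of `goldenMatrix`, normalized by row and column scaling: the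
leading entry of every column is `1`, and the columns of `D₄` meeting row `0` are `e₀ - eᵢ`. -/
structure IsGoldenNormalized (B : Matrix (Fin 4) (Fin 15) F) : Prop where
  sameZeroMinors : SameZeroMinors goldenMatrix B
  apply_leadingRow (j : Fin 15) : B (leadingRow j) j = 1
  apply_one_four : B 1 4 = -1
  apply_two_five : B 2 5 = -1
  apply_three_six : B 3 6 = -1

theorem SameZeroMinors.exists_isGoldenNormalized {C : Matrix (Fin 4) (Fin 15) F}
    (hC : SameZeroMinors goldenMatrix C) :
    ∃ B : Matrix (Fin 4) (Fin 15) F, IsGoldenNormalized B := by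
  have hne {i j} (hij : goldenMatrix i j ≠ 0) : C i j ≠ 0 := (hC.apply_eq_zero_iff i j).not.mp hij
  have hlead (j) : C (leadingRow j) j ≠ 0 := hne (by revert j; decide)
  have h04 : C 0 4 ≠ 0 := hlead 4
  have h05 : C 0 5 ≠ 0 := hlead 5
  have h06 : C 0 6 ≠ 0 := hlead 6
  have h14 : C 1 4 ≠ 0 := hne (by decide)
  have h25 : C 2 5 ≠ 0 := hne (by decide)
  have h36 : C 3 6 ≠ 0 := hne (by decide)
  let u : Fin 4 → F := ![1, -C 0 4 / C 1 4, -C 0 5 / C 2 5, -C 0 6 / C 3 6]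
  have hu (i) : u i ≠ 0 := by
    fin_cases i <;> simp [u, h04, h05, h06, h14, h25, h36]
  have hlead_scaled (j) : u (leadingRow j) * C (leadingRow j) j ≠ 0 := mul_ne_zero (hu _) (hlead j)
  refine ⟨_, hC.scale hu fun j ↦ inv_ne_zero (hlead_scaled j),
    fun j ↦ mul_inv_cancel₀ (hlead_scaled j), ?_, ?_, ?_⟩ <;>
  · simp only [of_apply, u, leadingRow, cons_val]
    field_simp

namespace IsGoldenNormalized

variable {B : Matrix (Fin 4) (Fin 15) F}

theorem apply_eq_zero (hB : IsGoldenNormalized B) {i : Fin 4} {j : Fin 15}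
    (h : goldenMatrix i j = 0) : B i j = 0 :=
  (hB.sameZeroMinors.apply_eq_zero_iff i j).mp h

theorem apply_two_seven (hB : IsGoldenNormalized B) : B 2 7 = -1 := by
  have h := (hB.sameZeroMinors ![0, 1, 2] ![4, 5, 7]).mp (by decide)
  have h04 : B 0 4 = 1 := hB.apply_leadingRow 4
  have h05 : B 0 5 = 1 := hB.apply_leadingRow 5
  have h17 : B 1 7 = 1 := hB.apply_leadingRow 7
  have h07 : B 0 7 = 0 := hB.apply_eq_zero (by decide)
  have h15 : B 1 5 = 0 := hB.apply_eq_zero (by decide)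
  have h24 : B 2 4 = 0 := hB.apply_eq_zero (by decide)
  rw [det_fin_three] at h
  simp only [submatrix_apply, cons_val, h04, h05, h07, hB.apply_one_four, h15, h17, h24,
    hB.apply_two_five] at h
  linear_combination h

theorem apply_three_eight (hB : IsGoldenNormalized B) : B 3 8 = -1 := by
  have h := (hB.sameZeroMinors ![0, 1, 3] ![4, 6, 8]).mp (by decide)
  have h04 : B 0 4 = 1 := hB.apply_leadingRow 4
  have h06 : B 0 6 = 1 := hB.apply_leadingRow 6
  have h18 : B 1 8 = 1 := hB.apply_leadingRow 8
  have h08 : B 0 8 = 0 := hB.apply_eq_zero (by decide)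
  have h16 : B 1 6 = 0 := hB.apply_eq_zero (by decide)
  have h34 : B 3 4 = 0 := hB.apply_eq_zero (by decide)
  rw [det_fin_three] at h
  simp only [submatrix_apply, cons_val, h04, h06, h08, hB.apply_one_four, h16, h18, h34,
    hB.apply_three_six] at h
  linear_combination h

theorem one_add_apply_add_apply_eleven (hB : IsGoldenNormalized B) :
    1 + B 1 11 + B 2 11 = 0 := by
  have h := (hB.sameZeroMinors ![0, 1, 2] ![4, 5, 11]).mp (by decide)
  have h04 : B 0 4 = 1 := hB.apply_leadingRow 4
  have h05 : B 0 5 = 1 := hB.apply_leadingRow 5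
  have h011 : B 0 11 = 1 := hB.apply_leadingRow 11
  have h15 : B 1 5 = 0 := hB.apply_eq_zero (by decide)
  have h24 : B 2 4 = 0 := hB.apply_eq_zero (by decide)
  rw [det_fin_three] at h
  simp only [submatrix_apply, cons_val, h04, h05, h011, hB.apply_one_four, h15, h24,
    hB.apply_two_five] at h
  linear_combination h

theorem sq_apply_one_ten (hB : IsGoldenNormalized B) : B 1 10 ^ 2 = B 1 10 + 1 := by
  have hmul (i i' j j')
      (h : goldenMatrix i j * goldenMatrix i' j' = goldenMatrix i j' * goldenMatrix i' j) :
      B i j * B i' j' = B i j' * B i' j := (hB.sameZeroMinors.mul_eq_mul_iff i i' j j').mp h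
  have h05 : B 0 5 = 1 := hB.apply_leadingRow 5
  have h06 : B 0 6 = 1 := hB.apply_leadingRow 6
  have h17 : B 1 7 = 1 := hB.apply_leadingRow 7
  have h18 : B 1 8 = 1 := hB.apply_leadingRow 8
  have h010 : B 0 10 = 1 := hB.apply_leadingRow 10
  have h011 : B 0 11 = 1 := hB.apply_leadingRow 11
  have h013 : B 0 13 = 1 := hB.apply_leadingRow 13
  have h310 : B 3 10 = -1 := by
    simpa [h06, hB.apply_three_six, h010] using hmul 0 3 6 10 (by decide)
  have h210 : B 2 10 = -B 1 10 := by
    simpa [h17, hB.apply_two_seven] using hmul 1 2 7 10 (by decide)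
  have h213 : B 2 13 = -1 := by
    simpa [h05, hB.apply_two_five, h013] using hmul 0 2 5 13 (by decide)
  have h313 : B 3 13 = -B 1 13 := by
    simpa [h18, hB.apply_three_eight] using hmul 1 3 8 13 (by decide)
  have h211 : B 2 11 = -B 1 10 := by
    simpa [h010, h011, h210] using hmul 0 2 10 11 (by decide)
  have h111 : B 1 11 = B 1 13 := by
    simpa [h011, h013, eq_comm] using hmul 0 1 11 13 (by decide)
  have hsum := hB.one_add_apply_add_apply_eleven
  have hprod : B 1 10 * B 1 13 = 1 := by
    simpa [h210, h213, h310, h313] using hmul 2 3 10 13 (by decide)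
  rw [h111, h211] at hsum
  linear_combination hprod - B 1 10 * hsum

end IsGoldenNormalized

end ForcedRoot

theorem stmt_14_general {K : Type*} [Field K] (φ : GoldenInt →+* K) (F : Type*) [Field F] :
    RealizesColumnMatroid (goldenMatrix.map φ) F ↔ ∃ z : F, z ^ 2 = z + 1 := by
  have hφ := goldenMatrix_minorsZeroOrUnit.sameZeroMinors_map φ
  have he : (goldenMatrix.map φ).submatrix id ![0, 1, 2, 3] = 1 := by
    rw [submatrix_map, goldenMatrix_submatrix_eq_one, Matrix.map_one _ (map_zero φ) φ.map_one]
  rw [realizesColumnMatroid_iff_exists_sameZeroMinors he]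
  constructor
  · rintro ⟨C, hC⟩
    obtain ⟨B, hB⟩ := (hφ.trans hC).exists_isGoldenNormalized
    exact ⟨B 1 10, hB.sq_apply_one_ten⟩
  · rintro ⟨z, hz⟩
    exact ⟨_, hφ.symm.trans
      (goldenMatrix_minorsZeroOrUnit.sameZeroMinors_map (GoldenInt.eval hz))⟩

/-- A field `F` realizes the column matroid of `[I₄ | D₄ | P₀]` iff `F` contains a root
of `x² − x − 1` (the universal partial field of this matroid is the golden-mean partial
field `𝔾`). -/
theorem stmt_14 (α : GaloisField 2 2) (hα : α ^ 2 = α + 1) (F : Type*) [Field F] :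
    RealizesColumnMatroid (matI4D4P0 α) F ↔ ∃ z : F, z ^ 2 = z + 1 := by
  rw [matI4D4P0_eq_goldenMatrix_map hα]
  exact stmt_14_general (GoldenInt.eval hα) F
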